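/- arXiv:0904.0535 — 2 statements merged into one kernel-verified Lean document; each statement's English description precedes it below -/
import Mathlib

section
/- Let L be a (1,1)-tensor field on M^n with vanishing Nijenhuis torsion, let χ(t) = det(t·Id − L) = a_0 + a_1 t + ⋯ + a_{n−1} t^{n−1} + t^n be its characteristic polynomial (the a_k being smooth functions on M), let dχ(t) := da_0 + t·da_1 + ⋯ + t^{n−1}·da_{n−1} be the polynomial in t with covector coefficients obtained by differentiating the coefficients, and let l = d(tr L). Then dχ(t)·L − t·dχ(t) = χ(t)·l, as an identity of polynomials in t with covector coefficients, where (dχ(t)·L)_s = (dχ(t))_p L^p_s denotes the covector dχ(t) composed with the operator L. -/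
open Matrix Polynomial Filter

noncomputable section

variable {ι : Type} [Fintype ι] [DecidableEq ι]

/-- Partial derivative of a real-valued function on `ι → ℝ` in the direction of the
`j`-th coordinate vector. -/
def pd (j : ι) (F : (ι → ℝ) → ℝ) (x : ι → ℝ) : ℝ :=
  fderiv ℝ F x (Pi.single j 1)

/-- Christoffel symbols `Γ^i_{jk}` of a metric given in local coordinates as a
matrix-valued function. -/
def christoffel (g : (ι → ℝ) → Matrix ι ι ℝ) (x : ι → ℝ) (i j k : ι) : ℝ :=
  (1 / 2) * ∑ m, (g x)⁻¹ i m *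
    (pd j (fun y => g y m k) x + pd k (fun y => g y m j) x - pd m (fun y => g y j k) x)

/-- A curve is a geodesic of `g` up to reparametrisation (an unparametrized geodesic):
`γ̈ + Γ(γ̇,γ̇) = α(t)·γ̇` for some function `α`. -/
def IsPregeodesic (g : (ι → ℝ) → Matrix ι ι ℝ) (γ : ℝ → ι → ℝ) : Prop :=
  ∃ α : ℝ → ℝ, ∀ t : ℝ, ∀ i : ι,
    deriv (fun s => deriv (fun τ => γ τ i) s) t
      + ∑ j, ∑ k, christoffel g (γ t) i j k *
          deriv (fun τ => γ τ j) t * deriv (fun τ => γ τ k) t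
      = α t * deriv (fun τ => γ τ i) t

/-- `g` is a pseudo-Riemannian metric (in local coordinates) on the set `U`. -/
structure IsMetricOn (g : (ι → ℝ) → Matrix ι ι ℝ) (U : Set (ι → ℝ)) : Prop where
  smooth : ∀ i j, ContDiffOn ℝ (⊤ : ℕ∞) (fun x => g x i j) U
  symm : ∀ x ∈ U, (g x)ᵀ = g x
  nondeg : ∀ x ∈ U, IsUnit (g x).det

/-- Two metrics are geodesically equivalent on `U`: they have the same geodesics
considered as unparametrized curves. -/
def GeodEquiv (g gb : (ι → ℝ) → Matrix ι ι ℝ) (U : Set (ι → ℝ)) : Prop :=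
  ∀ γ : ℝ → ι → ℝ, ContDiff ℝ (⊤ : ℕ∞) γ → (∀ t, γ t ∈ U) →
    (IsPregeodesic g γ ↔ IsPregeodesic gb γ)

/-- The (1,1)-tensor `L(g,ḡ)^i_j = (det ḡ / det g)^{1/(n+1)} ḡ^{ik} g_{kj}`. -/
def Lten (g gb : (ι → ℝ) → Matrix ι ι ℝ) (x : ι → ℝ) : Matrix ι ι ℝ :=
  (((gb x).det / (g x).det) ^ ((1 : ℝ) / (Fintype.card ι + 1))) • ((gb x)⁻¹ * g x)

/-- An admissible factorisation `χ = χ₁·χ₂` of the characteristic polynomial of `L`: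
both factors are monic of degree ≥ 1, have smooth coefficients, and have no common
complex root at any point of `U`. -/
structure AdmissibleFact (L : (ι → ℝ) → Matrix ι ι ℝ) (U : Set (ι → ℝ))
    (chi1 chi2 : (ι → ℝ) → Polynomial ℝ) : Prop where
  factor : ∀ x ∈ U, (L x).charpoly = chi1 x * chi2 x
  monic1 : ∀ x ∈ U, (chi1 x).Monic
  monic2 : ∀ x ∈ U, (chi2 x).Monic
  deg1 : ∀ x ∈ U, 1 ≤ (chi1 x).natDegree
  deg2 : ∀ x ∈ U, 1 ≤ (chi2 x).natDegree
  smooth1 : ∀ k, ContDiffOn ℝ (⊤ : ℕ∞) (fun x => (chi1 x).coeff k) U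
  smooth2 : ∀ k, ContDiffOn ℝ (⊤ : ℕ∞) (fun x => (chi2 x).coeff k) U
  coprime : ∀ x ∈ U, ¬ ∃ z : ℂ, aeval z (chi1 x) = 0 ∧ aeval z (chi2 x) = 0

/-- The distribution `D = ker χ(L)`. -/
def Dker (L : (ι → ℝ) → Matrix ι ι ℝ) (chi : (ι → ℝ) → Polynomial ℝ) (x : ι → ℝ) :
    Submodule ℝ (ι → ℝ) :=
  LinearMap.ker (Matrix.mulVecLin (aeval (L x) (chi x)))

/-- A distribution on `U` is integrable (involutive, which is equivalent by the
Frobenius theorem): the Lie bracket of any two smooth vector fields tangent to the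
distribution is again tangent to it. -/
def IsIntegrableDist (U : Set (ι → ℝ)) (D : (ι → ℝ) → Submodule ℝ (ι → ℝ)) : Prop :=
  ∀ u v : (ι → ℝ) → ι → ℝ, ContDiffOn ℝ (⊤ : ℕ∞) u U → ContDiffOn ℝ (⊤ : ℕ∞) v U →
    (∀ x ∈ U, u x ∈ D x) → (∀ x ∈ U, v x ∈ D x) →
    ∀ x ∈ U, (fderiv ℝ v x (u x) - fderiv ℝ u x (v x)) ∈ D x

/-- The Lie bracket of two vector fields on `ι → ℝ`. -/
def vbracket (u v : (ι → ℝ) → ι → ℝ) (x : ι → ℝ) : ι → ℝ :=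
  fderiv ℝ v x (u x) - fderiv ℝ u x (v x)

/-- The vector field `Lu : x ↦ L(x)(u(x))`. -/
def appT (L : (ι → ℝ) → Matrix ι ι ℝ) (u : (ι → ℝ) → ι → ℝ) : (ι → ℝ) → ι → ℝ :=
  fun x => (L x).mulVec (u x)

/-- The Nijenhuis torsion `N_L(u,v) = L²[u,v] − L[Lu,v] − L[u,Lv] + [Lu,Lv]`. -/
def nijenhuis (L : (ι → ℝ) → Matrix ι ι ℝ) (u v : (ι → ℝ) → ι → ℝ)
    (x : ι → ℝ) : ι → ℝ :=
  (L x).mulVec ((L x).mulVec (vbracket u v x))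
  - (L x).mulVec (vbracket (appT L u) v x)
  - (L x).mulVec (vbracket u (appT L v) x)
  + vbracket (appT L u) (appT L v) x

/-- `N_L = 0` on `U`, tested against all smooth vector fields. -/
def NijenhuisZero (L : (ι → ℝ) → Matrix ι ι ℝ) (U : Set (ι → ℝ)) : Prop :=
  ∀ u v : (ι → ℝ) → ι → ℝ, ContDiff ℝ (⊤ : ℕ∞) u → ContDiff ℝ (⊤ : ℕ∞) v →
    ∀ x ∈ U, nijenhuis L u v x = 0

/-!
Differentiate at a point `x` and write `D v` for the derivative of `L` along `v`. On constant
vector fields `u`, `v` the vanishing of the torsion reads `(L * D v - D (L v)) u = [L, B] u`, where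
`B` is the derivative of the vector field `L v`; so `L * D v - D (L v)` is a commutator with `L`.
By Jacobi's formula the derivative of `χ(t)` along `v` is `-tr (M * D v)` with `M = adj (t - L)`.
Since `M` commutes with `L`, pairing with `M` kills that commutator, whence
`dχ(t)(L v) - t dχ(t)(v) = tr (M * (t - L) * D v) = χ(t) tr (D v)`.
-/

section MatrixAlgebra

variable {m R : Type*} [Fintype m] [CommRing R]

theorem trace_mul_lie_of_commute {M A : Matrix m m R} (h : Commute M A) (B : Matrix m m R) :
    (M * ⁅A, B⁆).trace = 0 := by
  rw [Ring.lie_def, mul_sub, trace_sub, ← mul_assoc, ← mul_assoc, h.eq, mul_assoc,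
    trace_mul_comm A, sub_self]

variable [DecidableEq m]

theorem trace_adjugate_mul (A B : Matrix m m R) :
    (A.adjugate * B).trace = ∑ i, (A.updateRow i (B i)).det := by
  have det_updateRow (i : m) : (A.updateRow i (B i)).det = ∑ j, A.adjugate j i * B i j := by
    rw [← cramer_transpose_apply, cramer_eq_adjugate_mulVec, ← adjugate_transpose]
    rfl
  simp only [det_updateRow, trace, diag_apply, mul_apply]
  exact Finset.sum_comm

theorem commute_adjugate_scalar_sub (A : Matrix m m R) (t : R) :
    Commute (scalar m t - A).adjugate A := by
  have h : Commute (scalar m t - A).adjugate (scalar m t - A) := by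
    rw [commute_iff_eq, adjugate_mul, mul_adjugate]
  simpa using (scalar_commute t (mul_comm _) (scalar m t - A).adjugate).symm.sub_right h

theorem trace_adjugate_mul_sub_of_mul_sub_eq_lie {A D D' B : Matrix m m R}
    (h : A * D - D' = ⁅A, B⁆) (t : R) :
    t * ((scalar m t - A).adjugate * D).trace - ((scalar m t - A).adjugate * D').trace =
      A.charpoly.eval t * D.trace := by
  set M := (scalar m t - A).adjugate with hM
  have hD' : (M * D').trace = (M * (A * D)).trace := by
    rw [← sub_eq_zero, ← trace_sub, ← mul_sub, ← neg_sub, h, mul_neg, trace_neg,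
      trace_mul_lie_of_commute (commute_adjugate_scalar_sub A t), neg_zero]
  have ht : t * (M * D).trace = (M * (scalar m t * D)).trace := by
    rw [scalar_apply, ← smul_eq_diagonal_mul, mul_smul_comm, trace_smul, smul_eq_mul]
  calc t * (M * D).trace - (M * D').trace
      = (M * (scalar m t - A) * D).trace := by
        rw [ht, hD', ← trace_sub, ← mul_sub, ← sub_mul, mul_assoc]
    _ = A.charpoly.eval t * D.trace := by
        rw [hM, adjugate_mul, smul_mul_assoc, one_mul, trace_smul, smul_eq_mul, eval_charpoly]

end MatrixAlgebra

open scoped Matrix.Norms.Elementwise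

section MatrixCalculus

variable {m 𝕜 E : Type*} [NontriviallyNormedField 𝕜] [NormedAddCommGroup E] [NormedSpace 𝕜 E]
  {x : E}

theorem fderiv_linearMap_comp_apply {V F : Type*} [NormedAddCommGroup V] [NormedSpace 𝕜 V]
    [NormedAddCommGroup F] [NormedSpace 𝕜 F] [CompleteSpace 𝕜] [FiniteDimensional 𝕜 V]
    (f : V →ₗ[𝕜] F) {g : E → V} (hg : DifferentiableAt 𝕜 g x) (w : E) :
    fderiv 𝕜 (fun y => f (g y)) x w = f (fderiv 𝕜 g x w) :=
  DFunLike.congr_fun (f.toContinuousLinearMap.hasFDerivAt.comp x hg.hasFDerivAt).fderiv w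

variable [Fintype m] [DecidableEq m] {A : E → Matrix m m 𝕜}

theorem fderiv_det_apply (hA : DifferentiableAt 𝕜 A x) (w : E) :
    fderiv 𝕜 (fun y => (A y).det) x w = ((A x).adjugate * fderiv 𝕜 A x w).trace := by
  let detRow : ContinuousMultilinearMap 𝕜 (fun _ : m => m → 𝕜) 𝕜 :=
    { (detRowAlternating (n := m) (R := 𝕜)).toMultilinearMap with
      cont := Continuous.matrix_det (A := fun M : m → m → 𝕜 => of M) continuous_id }
  have h : HasFDerivAt (fun y => (A y).det) _ x :=
    (detRow.hasFDerivAt (A x)).comp x hA.hasFDerivAt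
  calc fderiv 𝕜 (fun y => (A y).det) x w
      = detRow.linearDeriv (A x) (fderiv 𝕜 A x w) := DFunLike.congr_fun h.fderiv w
    _ = ∑ i, ((A x).updateRow i (fderiv 𝕜 A x w i)).det := detRow.linearDeriv_apply _ _
    _ = ((A x).adjugate * fderiv 𝕜 A x w).trace := (trace_adjugate_mul _ _).symm

theorem differentiableAt_charpoly_coeff (hA : DifferentiableAt 𝕜 A x) (k : ℕ) :
    DifferentiableAt 𝕜 (fun y => (A y).charpoly.coeff k) x := by
  let p := (charpoly.univ 𝕜 m).coeff k
  have coeff_eq (y : E) :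
      (A y).charpoly.coeff k = MvPolynomial.aeval (fun ij : m × m => A y ij.1 ij.2) p :=
    (charpoly.univ_coeff_eval₂Hom m (RingHom.id 𝕜) (fun ij : m × m => A y ij.1 ij.2) k).symm
  have differentiable_aeval : Differentiable 𝕜 fun z : m × m → 𝕜 => MvPolynomial.aeval z p :=
    fun z => (AnalyticAt.aeval_mvPolynomial (fun ij =>
      (ContinuousLinearMap.proj (R := 𝕜) (φ := fun _ : m × m => 𝕜) ij).analyticAt z)
      p).differentiableAt
  have differentiableAt_entries :
      DifferentiableAt 𝕜 (fun y (ij : m × m) => A y ij.1 ij.2) x :=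
    differentiableAt_pi.2 fun ij => differentiableAt_pi.1 (differentiableAt_pi.1 hA ij.1) ij.2
  simp only [coeff_eq]
  exact (differentiable_aeval _).comp x differentiableAt_entries

variable (𝕜) in
/-- The derivative `dχ(t)` at `x` in the direction `w` of the characteristic polynomial of a
matrix-valued map, as a polynomial in `t`. The sum includes the leading coefficient of `χ`, whose
derivative vanishes. -/
def fderivCharpoly (A : E → Matrix m m 𝕜) (x w : E) : 𝕜[X] :=
  ∑ k ∈ Finset.range (Fintype.card m + 1),
    monomial k (fderiv 𝕜 (fun y => (A y).charpoly.coeff k) x w)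

theorem coeff_fderivCharpoly (A : E → Matrix m m 𝕜) (x w : E) (k : ℕ) :
    (fderivCharpoly 𝕜 A x w).coeff k = fderiv 𝕜 (fun y => (A y).charpoly.coeff k) x w := by
  simp only [fderivCharpoly, finsetSum_coeff, coeff_monomial, Finset.sum_ite_eq', Finset.mem_range]
  split_ifs with hk
  · rfl
  · have coeff_eq_zero (y : E) : (A y).charpoly.coeff k = 0 :=
      coeff_eq_zero_of_natDegree_lt (by rw [charpoly_natDegree_eq_dim]; omega)
    simp [coeff_eq_zero]

theorem eval_fderivCharpoly (hA : DifferentiableAt 𝕜 A x) (w : E) (t : 𝕜) :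
    (fderivCharpoly 𝕜 A x w).eval t =
      -((scalar m t - A x).adjugate * fderiv 𝕜 A x w).trace := by
  have det_eq_sum (y : E) : (scalar m t - A y).det =
      ∑ k ∈ Finset.range (Fintype.card m + 1), (A y).charpoly.coeff k * t ^ k := by
    rw [← eval_charpoly, eval_eq_sum_range, charpoly_natDegree_eq_dim]
  have fderiv_scalar_sub : fderiv 𝕜 (fun y => scalar m t - A y) x = -fderiv 𝕜 A x :=
    fderiv_const_sub _
  calc (fderivCharpoly 𝕜 A x w).eval t
      = fderiv 𝕜 (fun y => (scalar m t - A y).det) x w := by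
        simp only [det_eq_sum, fderivCharpoly, eval_finsetSum, eval_monomial]
        rw [fderiv_fun_sum fun k _ => (differentiableAt_charpoly_coeff hA k).mul_const _]
        simp only [fderiv_mul_const (differentiableAt_charpoly_coeff hA _), _root_.sum_apply,
          _root_.smul_apply, smul_eq_mul]
        exact Finset.sum_congr rfl fun k _ => mul_comm _ _
    _ = -((scalar m t - A x).adjugate * fderiv 𝕜 A x w).trace := by
        rw [fderiv_det_apply (hA.const_sub _), fderiv_scalar_sub, _root_.neg_apply, mul_neg,
          trace_neg]

end MatrixCalculus

section Torsion

variable {m : Type} [Fintype m] {U : Set (m → ℝ)} {L : (m → ℝ) → Matrix m m ℝ} {x : m → ℝ}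

theorem fderiv_appT_const_apply (hL : DifferentiableAt ℝ L x) (v w : m → ℝ) :
    fderiv ℝ (appT L fun _ => v) x w = fderiv ℝ L x w *ᵥ v :=
  fderiv_linearMap_comp_apply ((mulVecBilin ℝ ℝ).flip v) hL w

theorem nijenhuis_const (hL : DifferentiableAt ℝ L x) (u v : m → ℝ) :
    nijenhuis L (fun _ => u) (fun _ => v) x =
      L x *ᵥ (fderiv ℝ L x v *ᵥ u) - L x *ᵥ (fderiv ℝ L x u *ᵥ v)
        + (fderiv ℝ L x (L x *ᵥ u) *ᵥ v - fderiv ℝ L x (L x *ᵥ v) *ᵥ u) := by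
  simp only [nijenhuis, vbracket, fderiv_appT_const_apply hL, fderiv_fun_const, Pi.zero_apply,
    _root_.zero_apply, sub_zero, zero_sub, mulVec_zero, mulVec_neg]
  simp only [appT]
  abel

theorem NijenhuisZero.exists_mul_fderiv_sub_eq_lie (hN : NijenhuisZero L U) (hx : x ∈ U)
    (hL : DifferentiableAt ℝ L x) (v : m → ℝ) :
    ∃ B : Matrix m m ℝ, L x * fderiv ℝ L x v - fderiv ℝ L x (L x *ᵥ v) = ⁅L x, B⁆ := by
  classical
  let B := LinearMap.toMatrix' ((mulVecBilin ℝ ℝ).flip v ∘ₗ (fderiv ℝ L x).toLinearMap)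
  have hB (u : m → ℝ) : B *ᵥ u = fderiv ℝ L x u *ᵥ v := LinearMap.toMatrix'_mulVec _ u
  refine ⟨B, ext_of_mulVec_single fun j => ?_⟩
  have h := hN (fun _ => Pi.single j 1) (fun _ => v) contDiff_const contDiff_const x hx
  rw [nijenhuis_const hL] at h
  rw [Ring.lie_def, sub_mulVec, sub_mulVec, ← mulVec_mulVec, ← mulVec_mulVec, ← mulVec_mulVec,
    hB, hB, ← sub_eq_zero, ← h]
  abel

theorem NijenhuisZero.fderivCharpoly_mulVec_sub_X_mul [DecidableEq m] (hN : NijenhuisZero L U)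
    (hx : x ∈ U) (hL : DifferentiableAt ℝ L x) (v : m → ℝ) :
    fderivCharpoly ℝ L x (L x *ᵥ v) - X * fderivCharpoly ℝ L x v =
      (L x).charpoly * C (fderiv ℝ (fun y => (L y).trace) x v) := by
  obtain ⟨B, hB⟩ := hN.exists_mul_fderiv_sub_eq_lie hx hL v
  have htrace : fderiv ℝ (fun y => (L y).trace) x v = (fderiv ℝ L x v).trace :=
    fderiv_linearMap_comp_apply (traceLinearMap m ℝ ℝ) hL v
  refine Polynomial.funext fun t => ?_
  simp only [eval_sub, eval_mul, eval_X, eval_C, eval_fderivCharpoly hL, htrace,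
    ← trace_adjugate_mul_sub_of_mul_sub_eq_lie hB t]
  ring

end Torsion

theorem sum_pd_mul_apply (F : (ι → ℝ) → ℝ) (x : ι → ℝ) (M : Matrix ι ι ℝ) (s : ι) :
    ∑ q, pd q F x * M q s = fderiv ℝ F x (M *ᵥ Pi.single s 1) := by
  conv_rhs => rw [pi_eq_sum_univ' (M *ᵥ Pi.single s 1), map_sum]
  simp [pd, mul_comm]

theorem stmt15_general {U : Set (ι → ℝ)} {L : (ι → ℝ) → Matrix ι ι ℝ} (hNL : NijenhuisZero L U)
    {x : ι → ℝ} (hx : x ∈ U) (hL : ∀ i j, DifferentiableAt ℝ (fun y => L y i j) x)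
    (k : ℕ) (s : ι) :
    (∑ q, pd q (fun y => ((L y).charpoly).coeff k) x * L x q s)
      - (if k = 0 then 0 else pd s (fun y => ((L y).charpoly).coeff (k - 1)) x)
      = ((L x).charpoly).coeff k * pd s (fun y => (L y).trace) x := by
  have hL' : DifferentiableAt ℝ L x :=
    differentiableAt_pi.2 fun i => differentiableAt_pi.2 fun j => hL i j
  have h := congrArg (coeff · k) (hNL.fderivCharpoly_mulVec_sub_X_mul hx hL' (Pi.single s 1))
  simp only [coeff_sub, coeff_mul_C, coeff_fderivCharpoly] at h
  rw [sum_pd_mul_apply, pd, pd, ← h]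
  cases k with
  | zero => simp
  | succ k => simp [coeff_fderivCharpoly]

theorem stmt15 {n : ℕ} (U : Set (Fin n → ℝ)) (hU : IsOpen U)
    (L : (Fin n → ℝ) → Matrix (Fin n) (Fin n) ℝ)
    (hLsmooth : ∀ i j, ContDiffOn ℝ (⊤ : ℕ∞) (fun x => L x i j) U)
    (hNL : NijenhuisZero L U) :
    -- `dχ(t)·L − t·dχ(t) = χ(t)·l` as polynomials in `t` with covector
    -- coefficients: for every degree `k` and every covector index `s`,
    -- (coefficient of `t^k` in `dχ(t)·L`) − (coefficient of `t^k` in `t·dχ(t)`)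
    --   = (coefficient of `t^k` in `χ(t)·l`).
    ∀ x ∈ U, ∀ k : ℕ, ∀ s : Fin n,
      (∑ q, pd q (fun y => ((L y).charpoly).coeff k) x * L x q s)
        - (if k = 0 then 0 else pd s (fun y => ((L y).charpoly).coeff (k - 1)) x)
        = ((L x).charpoly).coeff k * pd s (fun y => (L y).trace) x := by
  exact fun x hx => stmt15_general hNL hx fun i j =>
    ((hLsmooth i j).contDiffAt (hU.mem_nhds hx)).differentiableAt (by simp)
end
end

section
/- Let g be a pseudo-Riemannian metric on M, L a g-self-adjoint (1,1)-tensor field, l = d(tr L), and let K, f, L satisfy the admissibility assumptions. For a tangent vector u define A*_u := (d/dt)|_{t=0} f(L + t·(u⊗l)^*), where (u⊗l)^* is the g-adjoint of the operator (u⊗l) : v ↦ l(v)·u, so that (u⊗l)^* v = g(u,v)·g^{-1}(l). Then A*_u v = A*_v u for all tangent vectors u, v. -/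
open Matrix Polynomial Filter

noncomputable section

variable {ι : Type} [Fintype ι] [DecidableEq ι]

/-- The assumptions (i)–(iv) of Section 1.3 on the compact set `K` and the function
`f : K → ℂ` (the condition on the spectrum of `L` is stated separately). -/
structure AdmissibleFun (K : Set ℂ) (f : ℂ → ℂ) : Prop where
  compact : IsCompact K
  conn : IsConnected Kᶜ
  cont : ContinuousOn f K
  holo : DifferentiableOn ℂ f (interior K)
  symmK : ∀ z ∈ K, (starRingEnd ℂ) z ∈ K
  symmf : ∀ z ∈ K, f ((starRingEnd ℂ) z) = (starRingEnd ℂ) (f z)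

/-- Assumption (v): the (complex) spectrum of `L(x)` lies in the interior of `K` for
every `x ∈ U`. -/
def SpectrumIn {ι : Type} [Fintype ι] [DecidableEq ι]
    (L : (ι → ℝ) → Matrix ι ι ℝ) (U : Set (ι → ℝ)) (K : Set ℂ) : Prop :=
  ∀ x ∈ U, spectrum ℂ ((L x).map (algebraMap ℝ ℂ)) ⊆ interior K

/-- `FL` represents the (1,1)-tensor `f(L)`: it is the limit of `pᵢ(L)` for a sequence
of real polynomials `pᵢ` converging to `f` uniformly on `K` (such a sequence exists by
Mergelyan's theorem, and the limit does not depend on its choice). -/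
def RepFunOfL {ι : Type} [Fintype ι] [DecidableEq ι]
    (L : (ι → ℝ) → Matrix ι ι ℝ) (U : Set (ι → ℝ)) (K : Set ℂ) (f : ℂ → ℂ)
    (FL : (ι → ℝ) → Matrix ι ι ℝ) : Prop :=
  ∃ p : ℕ → Polynomial ℝ,
    TendstoUniformlyOn (fun m z => aeval z (p m)) f atTop K ∧
    ∀ x ∈ U, ∀ i j, Tendsto (fun m => aeval (L x) (p m) i j) atTop (nhds (FL x i j))

/-!
For `f = X ^ k`, the derivative of `f(A)` along `w ⊗ S u` maps `v` to
`∑ S(u, A ^ i v) • A ^ (k - 1 - i) w`, which is symmetric in `u` and `v` because `S A ^ i` is a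
symmetric form. By linearity this covers all polynomials. To pass to the limit, one needs
convergence of derivatives, which uniform convergence gives only over `ℂ`: Newton interpolation at
the eigenvalues and the maximum principle bound `‖p(A')‖` by a constant times `sup_K ‖p‖` for all
complex matrices `A'` near `A`, so the approximating polynomials converge uniformly near `A`, and
the Weierstrass theorem applies on the complex line `A + t (w ⊗ S u)`.
-/

section DirectionalDerivative

variable {R A B : Type*} [CommSemiring R] [Semiring A] [Algebra R A] [Semiring B] [Algebra R B]

/-- The directional derivative at `a` along `b` of the polynomial map `x ↦ p(x)` on a
noncommutative algebra, as an algebraic expression linear in `p`: it sends `X ^ k` to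
`∑ a ^ (k - 1 - i) * b * a ^ i`, the sum being over `i < k`. -/
def aevalDeriv (a b : A) : R[X] →ₗ[R] A :=
  lsum fun k => LinearMap.toSpanSingleton R A (∑ i ∈ Finset.range k, a ^ (k - 1 - i) * b * a ^ i)

lemma aevalDeriv_monomial (a b : A) (k : ℕ) (c : R) :
    aevalDeriv a b (monomial k c) =
      c • ∑ i ∈ Finset.range k, a ^ (k - 1 - i) * b * a ^ i := by
  simp [aevalDeriv, lsum_apply, sum_monomial_index]

lemma map_aevalDeriv (φ : A →ₐ[R] B) (a b : A) (p : R[X]) :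
    φ (aevalDeriv a b p) = aevalDeriv (φ a) (φ b) p := by
  induction p using Polynomial.induction_on' with
  | add p q hp hq => simp only [map_add, hp, hq]
  | monomial k c => simp only [aevalDeriv_monomial, map_smul, map_sum, map_mul, map_pow]

lemma hasDerivAt_aeval_add_smul {𝕜 𝔸 : Type*} [NontriviallyNormedField 𝕜] [NormedRing 𝔸]
    [NormedAlgebra 𝕜 𝔸] [Algebra R 𝔸] (p : R[X]) (a b : 𝔸) (t : 𝕜) :
    HasDerivAt (fun t : 𝕜 => aeval (a + t • b) p) (aevalDeriv (a + t • b) b p) t := by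
  induction p using Polynomial.induction_on' with
  | add p q hp hq => simpa only [map_add] using hp.fun_add hq
  | monomial k c =>
    have hline : HasDerivAt (fun t : 𝕜 => a + t • b) b t := by
      simpa using ((hasDerivAt_id t).smul_const b).const_add a
    have hpow : HasDerivAt (fun t : 𝕜 => (a + t • b) ^ k)
        (∑ i ∈ Finset.range k, (a + t • b) ^ (k - 1 - i) * b * (a + t • b) ^ i) t := by
      simpa [_root_.sum_apply] using (hline.hasFDerivAt.fun_pow' k).hasDerivAt
    simpa only [aeval_monomial, aevalDeriv_monomial, Algebra.smul_def] using
      hpow.const_mul (algebraMap R 𝔸 c)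

end DirectionalDerivative

section SelfAdjoint

variable {R m : Type*} [CommSemiring R] [Fintype m] [DecidableEq m] {S A : Matrix m m R}

lemma isSymm_mul_pow (hS : S.IsSymm) (hSA : (S * A).IsSymm) (k : ℕ) : (S * A ^ k).IsSymm := by
  have h : SemiconjBy S A Aᵀ := by
    rw [SemiconjBy, ← hSA.eq, transpose_mul, hS.eq]
  rw [IsSymm, transpose_mul, hS.eq, transpose_pow, (h.pow_right k).eq]

lemma mulVec_dotProduct_pow_mulVec_comm (hS : S.IsSymm) (hSA : (S * A).IsSymm) (k : ℕ)
    (u v : m → R) : (S *ᵥ u) ⬝ᵥ (A ^ k *ᵥ v) = (S *ᵥ v) ⬝ᵥ (A ^ k *ᵥ u) := by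
  have hform (u v : m → R) : (S *ᵥ u) ⬝ᵥ (A ^ k *ᵥ v) = u ⬝ᵥ ((S * A ^ k) *ᵥ v) := by
    rw [← mulVec_mulVec, dotProduct_mulVec u, ← mulVec_transpose, hS.eq]
  rw [hform, hform, dotProduct_mulVec, ← mulVec_transpose, (isSymm_mul_pow hS hSA k).eq,
    dotProduct_comm]

-- `A ^ i * (w ⊗ S u) * A ^ j` sends `v` to `S(u, A ^ j v) • A ^ i w`, and `S(u, A ^ j v)` is
-- symmetric in `u` and `v`.
lemma aevalDeriv_vecMulVec_mulVec_comm (hS : S.IsSymm) (hSA : (S * A).IsSymm) (w u v : m → R)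
    (p : R[X]) :
    aevalDeriv A (vecMulVec w (S *ᵥ u)) p *ᵥ v = aevalDeriv A (vecMulVec w (S *ᵥ v)) p *ᵥ u := by
  induction p using Polynomial.induction_on' with
  | add p q hp hq => simp only [map_add, add_mulVec, hp, hq]
  | monomial k c =>
    simp only [aevalDeriv_monomial, smul_mulVec, sum_mulVec, ← mulVec_mulVec, vecMulVec_mulVec,
      mulVec_dotProduct_pow_mulVec_comm hS hSA _ u v]

end SelfAdjoint

section SpectralSet

open scoped Topology

/-- `K` is a spectral set for `a`, with constant `C`: the norm of `p(a)` is at most `C` times the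
supremum of `‖p‖` on `K`, for every polynomial `p`. The supremum is replaced by an arbitrary upper
bound, so that nothing is said about polynomials that are unbounded on `K`. -/
def IsSpectralSet {𝔸 : Type*} [NormedRing 𝔸] [NormedAlgebra ℂ 𝔸] (K : Set ℂ) (C : ℝ) (a : 𝔸) :
    Prop :=
  ∀ (p : ℂ[X]) (M : ℝ), (∀ z ∈ K, ‖p.eval z‖ ≤ M) → ‖aeval a p‖ ≤ C * M

lemma eq_C_eval_add_X_sub_C_mul_divByMonic {R : Type*} [CommRing R] (p : R[X]) (a : R) :
    p = C (p.eval a) + (X - C a) * (p /ₘ (X - C a)) := by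
  rw [← modByMonic_X_sub_C_eq_C_eval, modByMonic_add_div]

-- Outside the ball of radius `δ` this is the quotient formula; the maximum principle extends it
-- to the interior.
lemma norm_eval_divByMonic_X_sub_C_le {K : Set ℂ} {δ : ℝ} (hδ : 0 < δ) {a : ℂ}
    (ha : Metric.closedBall a δ ⊆ K) {p : ℂ[X]} {M : ℝ} (hM : ∀ z ∈ K, ‖p.eval z‖ ≤ M)
    {z : ℂ} (hz : z ∈ K) : ‖(p /ₘ (X - C a)).eval z‖ ≤ 2 / δ * M := by
  set q := p /ₘ (X - C a) with hq
  have hfar (w : ℂ) (hw : w ∈ K) (hwa : δ ≤ ‖w - a‖) : ‖q.eval w‖ ≤ 2 / δ * M := by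
    have hquot : (w - a) * q.eval w = p.eval w - p.eval a := by
      conv_rhs => rw [eq_C_eval_add_X_sub_C_mul_divByMonic p a, ← hq]
      simp
    have hbound : δ * ‖q.eval w‖ ≤ 2 * M := calc
      δ * ‖q.eval w‖ ≤ ‖w - a‖ * ‖q.eval w‖ := by gcongr
      _ = ‖p.eval w - p.eval a‖ := by rw [← norm_mul, hquot]
      _ ≤ M + M := norm_sub_le_of_le (hM w hw) (hM a (ha (Metric.mem_closedBall_self hδ.le)))
      _ = 2 * M := (two_mul M).symm
    rwa [div_mul_eq_mul_div, le_div_iff₀' hδ]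
  rcases le_or_gt δ ‖z - a‖ with hza | hza
  · exact hfar z hz hza
  · refine Complex.norm_le_of_forall_mem_frontier_norm_le (U := Metric.ball a δ)
      (f := fun w => q.eval w) Metric.isBounded_ball q.differentiable.diffContOnCl
      (fun w hw => ?_) (subset_closure (mem_ball_iff_norm.mpr hza))
    rw [frontier_ball a hδ.ne', mem_sphere_iff_norm] at hw
    exact hfar w (ha (mem_closedBall_iff_norm.mpr hw.le)) hw.ge

variable {𝔸 : Type*} [NormedRing 𝔸] [NormedAlgebra ℂ 𝔸]

-- Newton interpolation: split off one root `z` by `p(a) x = p(z) x + q(a) (a - z) x`, where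
-- `q = (p - p(z)) / (X - z)`, and continue with `q` and `(a - z) x`.
lemma norm_aeval_mul_le_of_aeval_prod_X_sub_C_mul_eq_zero {K : Set ℂ} {δ R : ℝ} (hδ : 0 < δ)
    {a : 𝔸} {s : Multiset ℂ} (hK : ∀ z ∈ s, Metric.closedBall z δ ⊆ K)
    (hR : ∀ z ∈ s, ‖a - algebraMap ℂ 𝔸 z‖ ≤ R) {x : 𝔸}
    (hx : aeval a (s.map fun z => X - C z).prod * x = 0) {p : ℂ[X]} {M : ℝ}
    (hM : ∀ z ∈ K, ‖p.eval z‖ ≤ M) :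
    ‖aeval a p * x‖ ≤ (∑ i ∈ Finset.range s.card, (2 / δ * R) ^ i) * M * ‖x‖ := by
  induction s using Multiset.induction_on generalizing x p M with
  | empty =>
    have hx0 : x = 0 := by simpa using hx
    simp [hx0]
  | cons z s ih =>
    simp only [Multiset.forall_mem_cons] at hK hR
    set y := (a - algebraMap ℂ 𝔸 z) * x
    set q := p /ₘ (X - C z) with hq
    set c := ∑ i ∈ Finset.range s.card, (2 / δ * R) ^ i
    have hR0 : 0 ≤ R := (norm_nonneg _).trans hR.1
    have hpz : ‖p.eval z‖ ≤ M := hM z (hK.1 (Metric.mem_closedBall_self hδ.le))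
    have hM0 : 0 ≤ M := (norm_nonneg _).trans hpz
    have hy : aeval a (s.map fun z => X - C z).prod * y = 0 := by
      rw [Multiset.map_cons, Multiset.prod_cons, mul_comm, map_mul] at hx
      simpa [y, mul_assoc] using hx
    have hsplit : aeval a p * x = p.eval z • x + aeval a q * y := by
      conv_lhs => rw [eq_C_eval_add_X_sub_C_mul_divByMonic p z, ← hq, mul_comm (X - C z)]
      simp [y, add_mul, mul_assoc, Algebra.smul_def]
    have hqy : ‖aeval a q * y‖ ≤ c * (2 / δ * M) * ‖y‖ :=
      ih hK.2 hR.2 hy fun w hw => norm_eval_divByMonic_X_sub_C_le hδ hK.1 hM hw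
    calc ‖aeval a p * x‖ ≤ ‖p.eval z • x‖ + ‖aeval a q * y‖ := hsplit ▸ norm_add_le _ _
      _ ≤ M * ‖x‖ + c * (2 / δ * M) * (R * ‖x‖) := by
        rw [norm_smul]
        gcongr
        refine hqy.trans ?_
        gcongr
        exact (norm_mul_le _ _).trans (by gcongr; exact hR.1)
      _ = _ := by rw [Multiset.card_cons, geom_sum_succ]; ring

variable [CompleteSpace 𝔸]

lemma eventually_spectrum_subset {V : Set ℂ} (hV : IsOpen V) {a : 𝔸} (ha : spectrum ℂ a ⊆ V) :
    ∀ᶠ a' in 𝓝 a, spectrum ℂ a' ⊆ V :=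
  ((upperHemicontinuous_spectrum ℂ 𝔸).upperHemicontinuousAt a V (hV.mem_nhdsSet.mpr ha)).mono
    fun _ => subset_of_mem_nhdsSet

lemma exists_eventually_closedBall_subset_of_spectrum_subset_interior {K : Set ℂ} {a : 𝔸}
    (ha : spectrum ℂ a ⊆ interior K) :
    ∃ δ > 0, ∀ᶠ a' in 𝓝 a, ∀ z ∈ spectrum ℂ a', Metric.closedBall z δ ⊆ K := by
  obtain ⟨δ, hδ, hδK⟩ :=
    (spectrum.isCompact (𝕜 := ℂ) a).exists_cthickening_subset_open isOpen_interior ha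
  refine ⟨δ / 2, half_pos hδ, ?_⟩
  filter_upwards [eventually_spectrum_subset Metric.isOpen_thickening
    (Metric.self_subset_thickening (half_pos hδ) (spectrum ℂ a))] with a' ha' z hz
  calc Metric.closedBall z (δ / 2)
      ⊆ Metric.cthickening (δ / 2) (Metric.thickening (δ / 2) (spectrum ℂ a)) :=
        Metric.closedBall_subset_cthickening (ha' hz) _
    _ ⊆ Metric.cthickening (δ / 2 + δ / 2) (spectrum ℂ a) :=
        Metric.cthickening_thickening_subset (half_pos hδ).le _ _
    _ ⊆ K := by rw [add_halves]; exact hδK.trans interior_subset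

lemma norm_sub_algebraMap_le_of_mem_spectrum {a : 𝔸} {z : ℂ} (hz : z ∈ spectrum ℂ a) :
    ‖a - algebraMap ℂ 𝔸 z‖ ≤ ‖a‖ * (1 + ‖(1 : 𝔸)‖ ^ 2) := calc
  ‖a - algebraMap ℂ 𝔸 z‖ ≤ ‖a‖ + ‖z‖ * ‖(1 : 𝔸)‖ := by
    rw [← norm_algebraMap]; exact norm_sub_le _ _
  _ ≤ ‖a‖ + ‖a‖ * ‖(1 : 𝔸)‖ * ‖(1 : 𝔸)‖ := by
    gcongr; exact spectrum.norm_le_norm_mul_of_mem hz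
  _ = ‖a‖ * (1 + ‖(1 : 𝔸)‖ ^ 2) := by ring

end SpectralSet

section Matrix

open scoped Matrix.Norms.Operator Topology

variable {m : Type*} [Fintype m] [DecidableEq m]

lemma isSpectralSet_of_closedBall_subset {K : Set ℂ} {δ R : ℝ} (hδ : 0 < δ) {A : Matrix m m ℂ}
    (hK : ∀ z ∈ spectrum ℂ A, Metric.closedBall z δ ⊆ K)
    (hR : ∀ z ∈ spectrum ℂ A, ‖A - algebraMap ℂ _ z‖ ≤ R) :
    IsSpectralSet K
      ((∑ i ∈ Finset.range (Fintype.card m), (2 / δ * R) ^ i) * ‖(1 : Matrix m m ℂ)‖) A := by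
  intro p M hM
  have hsplits := IsAlgClosed.splits A.charpoly
  have hroots {z : ℂ} (hz : z ∈ A.charpoly.roots) : z ∈ spectrum ℂ A :=
    mem_spectrum_iff_isRoot_charpoly.mpr (isRoot_of_mem_roots hz)
  have hcard : A.charpoly.roots.card = Fintype.card m := by
    rw [← hsplits.natDegree_eq_card_roots, charpoly_natDegree_eq_dim]
  have hzero : aeval A (A.charpoly.roots.map fun z => X - C z).prod * 1 = 0 := by
    rw [← hsplits.eq_prod_roots_of_monic A.charpoly_monic, aeval_self_charpoly, zero_mul]
  have h := norm_aeval_mul_le_of_aeval_prod_X_sub_C_mul_eq_zero hδ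
    (fun z hz => hK z (hroots hz)) (fun z hz => hR z (hroots hz)) hzero hM
  rwa [mul_one, hcard, mul_right_comm] at h

lemma exists_eventually_isSpectralSet {K : Set ℂ} {A : Matrix m m ℂ}
    (hA : spectrum ℂ A ⊆ interior K) : ∃ C, ∀ᶠ A' in 𝓝 A, IsSpectralSet K C A' := by
  obtain ⟨δ, hδ, hδK⟩ := exists_eventually_closedBall_subset_of_spectrum_subset_interior hA
  set R := (‖A‖ + 1) * (1 + ‖(1 : Matrix m m ℂ)‖ ^ 2)
  refine ⟨(∑ i ∈ Finset.range (Fintype.card m), (2 / δ * R) ^ i) * ‖(1 : Matrix m m ℂ)‖, ?_⟩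
  filter_upwards [hδK, continuous_norm.continuousAt.eventually_lt_const (lt_add_one ‖A‖)]
    with A' hA'K hA'
  refine isSpectralSet_of_closedBall_subset hδ hA'K fun z hz => ?_
  exact (norm_sub_algebraMap_le_of_mem_spectrum hz).trans
    (mul_le_mul_of_nonneg_right hA'.le (by positivity))

end Matrix

section PolynomialLimit

open scoped Topology

lemma tendsto_add_smul_nhds_zero (𝕜 : Type*) {E : Type*} [Semiring 𝕜] [TopologicalSpace 𝕜]
    [AddCommMonoid E] [TopologicalSpace E] [ContinuousAdd E] [Module 𝕜 E] [ContinuousSMul 𝕜 E]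
    (x y : E) : Tendsto (fun t : 𝕜 => x + t • y) (𝓝 0) (𝓝 x) := by
  have h : Continuous fun t : 𝕜 => x + t • y := by fun_prop
  simpa using h.tendsto 0

variable {R 𝔸 : Type*} [CommRing R] [NormedRing 𝔸] [NormedAlgebra ℂ 𝔸] [Algebra R 𝔸]
  {p : ℕ → R[X]} {a : 𝔸}

lemma uniformCauchySeqOn_aeval_of_isSpectralSet [Algebra R ℂ] [IsScalarTower R ℂ 𝔸]
    {K : Set ℂ} {C : ℝ} {s : Set 𝔸}
    (hp : UniformCauchySeqOn (fun k z => aeval z (p k)) atTop K)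
    (hs : ∀ x ∈ s, IsSpectralSet K C x) :
    UniformCauchySeqOn (fun k x => aeval x (p k)) atTop s := by
  rw [Metric.uniformCauchySeqOn_iff] at hp ⊢
  intro ε hε
  obtain ⟨N, hN⟩ := hp (ε / (|C| + 1)) (by positivity)
  refine ⟨N, fun j hj k hk x hx => ?_⟩
  have hbound := hs x hx ((p j - p k).map (algebraMap R ℂ)) (ε / (|C| + 1)) fun z hz => by
    simpa [dist_eq_norm] using (hN j hj k hk z hz).le
  rw [aeval_map_algebraMap, map_sub] at hbound
  calc dist (aeval x (p j)) (aeval x (p k)) ≤ C * (ε / (|C| + 1)) := by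
        rwa [dist_eq_norm]
    _ ≤ |C| * (ε / (|C| + 1)) := by gcongr; exact le_abs_self C
    _ < (|C| + 1) * (ε / (|C| + 1)) := by gcongr; exact lt_add_one _
    _ = ε := mul_div_cancel₀ _ (by positivity)

variable [CompleteSpace 𝔸]

lemma exists_tendstoUniformlyOn_aeval_of_isSpectralSet [Algebra R ℂ] [IsScalarTower R ℂ 𝔸]
    {K : Set ℂ} {C : ℝ}
    (hp : UniformCauchySeqOn (fun k z => aeval z (p k)) atTop K)
    (ha : ∀ᶠ x in 𝓝 a, IsSpectralSet K C x) :
    ∃ F : 𝔸 → 𝔸, ∃ s ∈ 𝓝 a, TendstoUniformlyOn (fun k x => aeval x (p k)) F atTop s := by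
  have hcauchy : UniformCauchySeqOn (fun k x => aeval x (p k)) atTop
      {x : 𝔸 | IsSpectralSet K C x} :=
    uniformCauchySeqOn_aeval_of_isSpectralSet hp fun _ hx => hx
  have hlim (x : 𝔸) (hx : IsSpectralSet K C x) :
      ∃ y, Tendsto (fun k => aeval x (p k)) atTop (𝓝 y) :=
    cauchySeq_tendsto_of_complete (hcauchy.cauchySeq hx)
  choose! F hF using hlim
  exact ⟨F, _, ha, hcauchy.tendstoUniformlyOn_of_tendsto hF⟩

lemma exists_hasDerivAt_tendsto_aevalDeriv {F : 𝔸 → 𝔸} {s : Set 𝔸} (hs : s ∈ 𝓝 a)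
    (hF : TendstoUniformlyOn (fun k x => aeval x (p k)) F atTop s) (b : 𝔸) :
    ∃ F', HasDerivAt (fun t : ℂ => F (a + t • b)) F' 0 ∧
      Tendsto (fun k => aevalDeriv a b (p k)) atTop (𝓝 F') := by
  obtain ⟨V, hVs, hV, hV0⟩ := mem_nhds_iff.mp (tendsto_add_smul_nhds_zero ℂ a b hs)
  have hunif : TendstoLocallyUniformlyOn (fun k (t : ℂ) => aeval (a + t • b) (p k))
      (fun t => F (a + t • b)) atTop V :=
    ((hF.comp _).mono hVs).tendstoLocallyUniformlyOn
  have hdiff : ∀ᶠ k in atTop, DifferentiableOn ℂ (fun t : ℂ => aeval (a + t • b) (p k)) V :=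
    .of_forall fun k t _ =>
      (hasDerivAt_aeval_add_smul (p k) a b t).differentiableAt.differentiableWithinAt
  refine ⟨_,
    ((hunif.differentiableOn hdiff hV).differentiableAt (hV.mem_nhds hV0)).hasDerivAt, ?_⟩
  have hlim := (hunif.deriv hdiff hV).tendsto_at hV0
  simpa only [Function.comp_apply, (hasDerivAt_aeval_add_smul _ a b _).deriv, zero_smul,
    add_zero] using hlim

end PolynomialLimit

section RealMatrix

open scoped Matrix.Norms.Operator Topology

variable {m : Type*} [Fintype m] [DecidableEq m] {K : Set ℂ} {p : ℕ → ℝ[X]}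

lemma tendsto_aevalDeriv_of_hasDerivAt
    (hp : UniformCauchySeqOn (fun k z => aeval z (p k)) atTop K) {F : Matrix m m ℝ → Matrix m m ℝ}
    (hF : ∀ X : Matrix m m ℝ, spectrum ℂ (X.map (algebraMap ℝ ℂ)) ⊆ interior K →
      Tendsto (fun k => aeval X (p k)) atTop (𝓝 (F X)))
    {A B A' : Matrix m m ℝ} (hA : spectrum ℂ (A.map (algebraMap ℝ ℂ)) ⊆ interior K)
    (hA' : HasDerivAt (fun t : ℝ => F (A + t • B)) A' 0) :
    Tendsto (fun k => aevalDeriv A B (p k)) atTop (𝓝 A') := by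
  set φ : Matrix m m ℝ →ₐ[ℝ] Matrix m m ℂ := (Algebra.ofId ℝ ℂ).mapMatrix
  have hφ : Topology.IsClosedEmbedding φ :=
    LinearMap.isClosedEmbedding_of_injective (f := φ.toLinearMap) (LinearMap.ker_eq_bot.mpr
      (map_injective (algebraMap ℝ ℂ).injective))
  obtain ⟨C, hC⟩ := exists_eventually_isSpectralSet hA
  obtain ⟨G, s, hs, hG⟩ := exists_tendstoUniformlyOn_aeval_of_isSpectralSet hp hC
  obtain ⟨G', hG', hlim⟩ := exists_hasDerivAt_tendsto_aevalDeriv hs hG (φ B)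
  have hGF : ∀ᶠ X in 𝓝 A, G (φ X) = φ (F X) := by
    filter_upwards [hφ.continuous.continuousAt hs, hφ.continuous.continuousAt.eventually
      (eventually_spectrum_subset isOpen_interior hA)] with X hXs hX
    refine tendsto_nhds_unique (hG.tendsto_at hXs)
      (((hφ.continuous.tendsto _).comp (hF X hX)).congr fun k => ?_)
    exact (aeval_algHom_apply φ X (p k)).symm
  have hGφ : HasDerivAt (fun t : ℝ => φ (F (A + t • B))) G' 0 := by
    have hGofReal : HasDerivAt (fun t : ℝ => G (φ A + (t : ℂ) • φ B)) G' 0 := by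
      have h := hG'.scomp_of_eq (0 : ℝ) Complex.ofRealCLM.hasDerivAt (map_zero _).symm
      rwa [Complex.ofRealCLM_apply, Complex.ofReal_one, one_smul] at h
    refine hGofReal.congr_of_eventuallyEq ?_
    filter_upwards [(tendsto_add_smul_nhds_zero ℝ A B).eventually hGF] with t ht
    rw [← ht, map_add, map_smul]
    rfl
  have hFφ : HasDerivAt (fun t : ℝ => φ (F (A + t • B))) (φ A') 0 :=
    (LinearMap.toContinuousLinearMap φ.toLinearMap).hasFDerivAt.comp_hasDerivAt (0 : ℝ) hA'
  rw [hGφ.unique hFφ] at hlim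
  refine hφ.isInducing.tendsto_nhds_iff.mpr (hlim.congr fun k => ?_)
  exact (map_aevalDeriv φ A B (p k)).symm

end RealMatrix

theorem stmt16_general {m : Type*} [Fintype m] [DecidableEq m] {S A : Matrix m m ℝ}
    (hS : S.IsSymm) (hSA : (S * A).IsSymm) {K : Set ℂ}
    (hA : spectrum ℂ (A.map (algebraMap ℝ ℂ)) ⊆ interior K) {f : ℂ → ℂ} {p : ℕ → ℝ[X]}
    (hp : TendstoUniformlyOn (fun k z => aeval z (p k)) f atTop K)
    {F : Matrix m m ℝ → Matrix m m ℝ}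
    (hF : ∀ X : Matrix m m ℝ, spectrum ℂ (X.map (algebraMap ℝ ℂ)) ⊆ interior K →
      ∀ i j, Tendsto (fun k => aeval X (p k) i j) atTop (nhds (F X i j)))
    {w : m → ℝ} {Astar : (m → ℝ) → Matrix m m ℝ}
    (hAstar : ∀ u i j,
      HasDerivAt (fun t : ℝ => F (A + t • vecMulVec w (S *ᵥ u)) i j) (Astar u i j) 0)
    (u v : m → ℝ) : Astar u *ᵥ v = Astar v *ᵥ u := by
  have hF' (X : Matrix m m ℝ) (hX : spectrum ℂ (X.map (algebraMap ℝ ℂ)) ⊆ interior K) :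
      Tendsto (fun k => aeval X (p k)) atTop (nhds (F X)) :=
    tendsto_pi_nhds.mpr fun i => tendsto_pi_nhds.mpr (hF X hX i)
  have hAstar' (u : m → ℝ) :
      HasDerivAt (fun t : ℝ => F (A + t • vecMulVec w (S *ᵥ u))) (Astar u) 0 :=
    hasDerivAt_pi.mpr fun i => hasDerivAt_pi.mpr (hAstar u i)
  have hlim (u v : m → ℝ) :
      Tendsto (fun k => aevalDeriv A (vecMulVec w (S *ᵥ u)) (p k) *ᵥ v) atTop
        (nhds (Astar u *ᵥ v)) :=
    ((continuous_id.matrix_mulVec continuous_const).tendsto _).comp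
      (tendsto_aevalDeriv_of_hasDerivAt hp.uniformCauchySeqOn hF' hA (hAstar' u))
  exact tendsto_nhds_unique (hlim u v) ((hlim v u).congr fun k =>
    aevalDeriv_vecMulVec_mulVec_comm hS hSA w v u (p k))

theorem stmt16 {n : ℕ} (U : Set (Fin n → ℝ)) (hU : IsOpen U)
    (g : (Fin n → ℝ) → Matrix (Fin n) (Fin n) ℝ) (hg : IsMetricOn g U)
    (L : (Fin n → ℝ) → Matrix (Fin n) (Fin n) ℝ)
    (hLsmooth : ∀ i j, ContDiffOn ℝ (⊤ : ℕ∞) (fun x => L x i j) U)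
    -- `L` is `g`-self-adjoint
    (hLsa : ∀ x ∈ U, (g x * L x)ᵀ = g x * L x)
    (K : Set ℂ) (f : ℂ → ℂ)
    (hadm : AdmissibleFun K f) (hspec : SpectrumIn L U K)
    -- `F` realises the operator function `A ↦ f(A)` on matrices whose spectrum
    -- lies in the interior of `K`, via a sequence of real polynomials converging
    -- to `f` uniformly on `K`
    (p : ℕ → Polynomial ℝ)
    (hp : TendstoUniformlyOn (fun m z => aeval z (p m)) f atTop K)
    (F : Matrix (Fin n) (Fin n) ℝ → Matrix (Fin n) (Fin n) ℝ)
    (hF : ∀ A : Matrix (Fin n) (Fin n) ℝ,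
      spectrum ℂ (A.map (algebraMap ℝ ℂ)) ⊆ interior K →
      ∀ i j, Tendsto (fun m => aeval A (p m) i j) atTop (nhds (F A i j)))
    -- the matrix of the operator `(u⊗l)^*`, i.e. `v ↦ g(u,v)·g⁻¹(l)`, `l = d tr L`
    (B : (Fin n → ℝ) → (Fin n → ℝ) → Matrix (Fin n) (Fin n) ℝ)
    (hB : ∀ x u, B x u = Matrix.of fun i j =>
      ((g x)⁻¹.mulVec (fun s => pd s (fun y => (L y).trace) x)) i * ((g x).mulVec u) j)
    -- `A*_u = (d/dt)|₀ f(L + t·(u⊗l)^*)`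
    (Astar : (Fin n → ℝ) → (Fin n → ℝ) → Matrix (Fin n) (Fin n) ℝ)
    (hAstar : ∀ x ∈ U, ∀ u : Fin n → ℝ, ∀ i j,
      HasDerivAt (fun t : ℝ => F (L x + t • B x u) i j) (Astar x u i j) 0) :
    -- then `A*_u v = A*_v u`
    ∀ x ∈ U, ∀ u v : Fin n → ℝ, (Astar x u).mulVec v = (Astar x v).mulVec u := by
  intro x hx
  simp only [hB] at hAstar
  exact stmt16_general (hg.symm x hx) (hLsa x hx) (hspec x hx) hp hF (hAstar x hx)
end
end
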